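/- Let r/s = [a_1,…,a_{2m}], n = ∑_{i=1}^{2m} a_i, k = ∑_{i=1}^m a_{2i}, and let λ = λ(r/s), μ = μ(r/s) be the partitions associated to the snake graph of r/s. Then the number of F_q-points of the union of open Schubert cells ⋃_{μ ≤ ν ≤ λ} Ω°_ν in Gr_k(F_q^n) equals q^{|μ|} · R(q), where R(q) is the numerator of the q-rational [r/s]_q. -/

import Mathlib

def snakeWord (a : List ℕ) : List Bool :=
  (List.range a.length).flatMap fun i =>
    List.replicate
      (if i = 0 ∨ i = a.length - 1 then a.getD i 0 - 1 else a.getD i 0)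
      (i % 2 == 1)

def tilePos (w : List Bool) (j : ℕ) : ℕ × ℕ :=
  ((w.take j).count false, (w.take j).count true)

def snakeHeight (w : List Bool) : ℕ := w.count true + 1

def rowLen (w : List Bool) (y : ℕ) : ℕ :=
  ((Finset.range (w.length + 1)).filter fun j => (tilePos w j).2 ≤ y).sup
    (fun j => (tilePos w j).1) + 1

def rowMin (w : List Bool) (y : ℕ) : ℕ :=
  rowLen w y - ((Finset.range (w.length + 1)).filter fun j => (tilePos w j).2 = y).card

/-- The `y`-th part (from the largest) of the partition `λ(G(r/s))`. -/
def lamPart (w : List Bool) (y : ℕ) : ℕ :=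
  if y < snakeHeight w then rowLen w (snakeHeight w - 1 - y) else 0

/-- The `y`-th part (from the largest) of the partition `μ(G(r/s))`. -/
def muPart (w : List Bool) (y : ℕ) : ℕ :=
  if y < snakeHeight w then rowMin w (snakeHeight w - 1 - y) else 0

/-- The Morier-Genoud–Ovsienko q-deformed continued fraction. -/
noncomputable def qCF : RatFunc ℚ → List ℕ → RatFunc ℚ
  | _, [] => 0
  | v, [a] => ∑ i ∈ Finset.range a, v ^ i
  | v, a :: b :: l => (∑ i ∈ Finset.range a, v ^ i) + v ^ a / qCF v⁻¹ (b :: l)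

/-- The linear map `K^n → K^n` keeping the first `j` coordinates and zeroing the rest. -/
noncomputable def truncMap (K : Type) [Field K] (n j : ℕ) :
    (Fin n → K) →ₗ[K] (Fin n → K) :=
  LinearMap.pi fun i => if (i : ℕ) < j then LinearMap.proj i else 0

/-- Column `j` is a pivot column of the row-echelon representative of `W ⊆ K^n`. -/
def IsPivot {K : Type} [Field K] {n : ℕ} (W : Submodule K (Fin n → K)) (j : ℕ) : Prop :=
  Module.finrank K (W.map (truncMap K n (j + 1))) =
    Module.finrank K (W.map (truncMap K n j)) + 1

/-!
A word in `false` (a step to the right) and `true` (a step up) describes a snake graph. A partition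
`ν` between `μ` and `λ` either contains the last tile of the graph, so that its top row is full, or
does not. Appending a tile acts on the pair of generating functions `∑ q^{|ν|}` of the two kinds as
right multiplication by one of the Morier-Genoud–Ovsienko matrices `R_q` and `L_q`, up to the power
of `q` by which `q^{|μ|}` grows. The whole interval therefore has generating function `q^{|μ|}`
times an entry of a product of such matrices. Multiplied out in blocks `R_q^{a₁} L_q^{a₂} ⋯`, the
same product unfolds the `q`-deformed continued fraction. Each letter preserves coprimality and
monicity of the resulting fraction, so its numerator is `R(q)` itself. Finally, the subspaces with
pivot set `I_ν` are parametrised by the `|ν|` free entries of a reduced echelon basis, so setting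
`q = |K|` turns the generating function into a point count.
-/

/-! ### Reduced echelon bases -/

section Echelon

open Finset

variable {K ι : Type*} [DivisionRing K] [Fintype ι] [LinearOrder ι]

open Classical in
/-- The set of pivot columns of the row-echelon representative of `W`: the positions in which
vectors of `W` can have their first nonzero coordinate. -/
noncomputable def pivots (W : Submodule K (ι → K)) : Finset ι :=
  {j | ∃ x ∈ W, (∀ i < j, x i = 0) ∧ x j ≠ 0}

lemma mem_pivots {W : Submodule K (ι → K)} {j : ι} :
    j ∈ pivots W ↔ ∃ x ∈ W, (∀ i < j, x i = 0) ∧ x j ≠ 0 := by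
  simp [pivots]

lemma exists_mem_pivots_le {W : Submodule K (ι → K)} {x : ι → K} (hx : x ∈ W) {j : ι}
    (hj : x j ≠ 0) : ∃ i ∈ pivots W, i ≤ j ∧ x i ≠ 0 := by
  obtain ⟨i, hij, hi⟩ := exists_minimal_le_of_wellFoundedLT (fun i => x i ≠ 0) j hj
  have hlt : ∀ l < i, x l = 0 := fun l hl => not_not.1 (hi.not_prop_of_lt hl)
  exact ⟨i, mem_pivots.2 ⟨x, hx, hlt, hi.prop⟩, hij, hi.prop⟩

lemma eq_of_eqOn_pivots {W : Submodule K (ι → K)} {x y : ι → K} (hx : x ∈ W) (hy : y ∈ W)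
    (h : ∀ i ∈ pivots W, x i = y i) : x = y := by
  by_contra hne
  obtain ⟨j, hj⟩ := Function.ne_iff.1 hne
  obtain ⟨i, hi, -, hxy⟩ := exists_mem_pivots_le (W.sub_mem hx hy) (sub_ne_zero.2 hj)
  exact hxy (sub_eq_zero.2 (h i hi))

lemma exists_mem_eqOn_of_subset_pivots {W : Submodule K (ι → K)} {I : Finset ι}
    (hI : I ⊆ pivots W) (t : ι → K) : ∃ x ∈ W, ∀ i ∈ I, x i = t i := by
  induction I using Finset.induction_on_max with
  | empty => exact ⟨0, W.zero_mem, by simp⟩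
  | insert j I hlt ih =>
    obtain ⟨hj, hI⟩ := insert_subset_iff.1 hI
    obtain ⟨x, hx, hxt⟩ := ih hI
    obtain ⟨v, hv, hv0, hvj⟩ := mem_pivots.1 hj
    refine ⟨x + ((t j - x j) / v j) • v, W.add_mem hx (W.smul_mem _ hv), fun i hi => ?_⟩
    rcases mem_insert.1 hi with rfl | hi
    · simp [hvj]
    · simp [hv0 i (hlt i hi), hxt i hi]

lemma finrank_eq_card_pivots (W : Submodule K (ι → K)) :
    Module.finrank K W = #(pivots W) := by
  let restrict : W →ₗ[K] pivots W → K := (LinearMap.funLeft K K Subtype.val).domRestrict W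
  have hinj : Function.Injective restrict := fun x y hxy =>
    Subtype.ext (eq_of_eqOn_pivots x.2 y.2 fun i hi => congrFun hxy ⟨i, hi⟩)
  have hsurj : Function.Surjective restrict := fun t => by
    obtain ⟨x, hx, hxt⟩ := exists_mem_eqOn_of_subset_pivots (Subset.refl (pivots W))
      (fun i => if hi : i ∈ pivots W then t ⟨i, hi⟩ else 0)
    exact ⟨⟨x, hx⟩, funext fun i => (hxt i i.2).trans (dif_pos i.2)⟩
  rw [(LinearEquiv.ofBijective restrict ⟨hinj, hsurj⟩).finrank_eq,
    Module.finrank_fintype_fun_eq_card, Fintype.card_coe]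

/-- The columns in which the row with pivot `i` of a reduced echelon matrix with pivot set `I` may
have an arbitrary entry. -/
def freeColumns (I : Finset ι) (i : ι) : Finset ι :=
  {j | j ∉ I ∧ i < j}

lemma mem_freeColumns {I : Finset ι} {i j : ι} : j ∈ freeColumns I i ↔ j ∉ I ∧ i < j := by
  simp [freeColumns]

lemma card_freeColumns_map {κ : Type*} [Fintype κ] [LinearOrder κ] [LocallyFiniteOrderTop κ]
    [LocallyFiniteOrderTop ι] (P : κ ↪o ι) (s : κ) :
    #(freeColumns (univ.map P.toEmbedding) (P s)) = #(Ioi (P s)) - #(Ioi s) := by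
  have hfree : freeColumns (univ.map P.toEmbedding) (P s) =
      Ioi (P s) \ (Ioi s).map P.toEmbedding := by
    ext j
    simp only [mem_freeColumns, mem_map, mem_sdiff, mem_Ioi, mem_univ, true_and]
    refine ⟨fun ⟨hj, hs⟩ => ⟨hs, fun ⟨t, _, ht⟩ => hj ⟨t, ht⟩⟩, fun ⟨hs, hj⟩ => ⟨?_, hs⟩⟩
    rintro ⟨t, rfl⟩
    exact hj ⟨t, P.lt_iff_lt.1 hs, rfl⟩
  have hsub : (Ioi s).map P.toEmbedding ⊆ Ioi (P s) := fun j hj => by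
    obtain ⟨t, ht, rfl⟩ := mem_map.1 hj
    exact mem_Ioi.2 (P.lt_iff_lt.2 (mem_Ioi.1 ht))
  rw [hfree, card_sdiff_of_subset hsub, card_map]

variable (K) in
/-- The arrays `c` for which the vectors `eᵢ + c i`, `i ∈ I`, form a reduced echelon basis with
pivot set `I`. The rows outside `I` are set to zero, which makes `c` unique. -/
def echelonTails (I : Finset ι) : Set (ι → ι → K) :=
  {c | ∀ i j, c i j ≠ 0 → i ∈ I ∧ j ∈ freeColumns I i}

variable {I : Finset ι} {c d : ι → ι → K}

lemma echelonTails_apply_of_mem (hc : c ∈ echelonTails K I) (i : ι) {j : ι} (hj : j ∈ I) :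
    c i j = 0 :=
  by_contra fun h => (mem_freeColumns.1 (hc i j h).2).1 hj

lemma echelonTails_row_of_notMem (hc : c ∈ echelonTails K I) {i : ι} (hi : i ∉ I) : c i = 0 :=
  funext fun j => by_contra fun h => hi (hc i j h).1

lemma ncard_echelonTails [Fintype K] (I : Finset ι) :
    (echelonTails K I).ncard = Fintype.card K ^ ∑ i ∈ I, #(freeColumns I i) := by
  classical
  let entries (i j : ι) : Finset K := if i ∈ I ∧ j ∈ freeColumns I i then univ else {0}
  have hpi : echelonTails K I =
      ↑(Fintype.piFinset fun i => Fintype.piFinset (entries i) : Finset (ι → ι → K)) := by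
    ext c
    simp only [echelonTails, entries, Set.mem_ofPred_eq, mem_coe, Fintype.mem_piFinset]
    refine forall₂_congr fun i j => ?_
    split_ifs with h <;> simp [h]
  have hrow (i : ι) : ∏ j, #(entries i j) =
      if i ∈ I then Fintype.card K ^ #(freeColumns I i) else 1 := by
    split_ifs with hi <;> simp [entries, hi, apply_ite card]
  rw [hpi, Set.ncard_coe_finset, Fintype.card_piFinset]
  simp only [Fintype.card_piFinset, hrow, prod_ite_mem, univ_inter, prod_pow_eq_pow_sum]

/-- The row space of the reduced echelon matrix with pivot set `I` and tails `c`, given by the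
equations expressing the coordinates outside `I` through those in `I`. -/
def echelonSpace (I : Finset ι) (c : ι → ι → K) : Submodule K (ι → K) where
  carrier := {x | ∀ j ∉ I, x j = ∑ i ∈ I, x i * c i j}
  add_mem' hx hy j hj := by simp only [Pi.add_apply, hx j hj, hy j hj, add_mul, sum_add_distrib]
  zero_mem' j _ := by simp
  smul_mem' a x hx j hj := by simp only [Pi.smul_apply, smul_eq_mul, hx j hj, mul_sum, mul_assoc]

lemma single_add_mem_echelonSpace (hc : c ∈ echelonTails K I) {i : ι} (hi : i ∈ I) :
    Pi.single i 1 + c i ∈ echelonSpace I c := by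
  intro j hj
  have hji : j ≠ i := fun h => hj (h ▸ hi)
  have hcc : ∑ l ∈ I, c i l * c l j = 0 := sum_eq_zero fun l hl => by
    rw [echelonTails_apply_of_mem hc i hl, zero_mul]
  simp [add_mul, sum_add_distrib, hcc, hji, Pi.single_apply, hi]

lemma pivots_echelonSpace (hc : c ∈ echelonTails K I) : pivots (echelonSpace I c) = I := by
  ext j
  refine mem_pivots.trans ⟨?_, fun hj => ?_⟩
  · rintro ⟨x, hx, hx0, hxj⟩
    by_contra hj
    refine hxj ((hx j hj).trans (sum_eq_zero fun i _ => ?_))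
    by_cases hij : i < j
    · rw [hx0 i hij, zero_mul]
    · rw [by_contra fun h => hij (mem_freeColumns.1 (hc i j h).2).2, mul_zero]
  · refine ⟨_, single_add_mem_echelonSpace hc hj, fun i hij => ?_, ?_⟩
    · have hcji : c j i = 0 := by_contra fun h => (mem_freeColumns.1 (hc j i h).2).2.not_gt hij
      simp [hcji, hij.ne]
    · simp [echelonTails_apply_of_mem hc j hj]

lemma injOn_echelonSpace : Set.InjOn (echelonSpace I) (echelonTails K I) := by
  intro c hc d hd hcd
  funext i
  by_cases hi : i ∈ I
  · have hrow : Pi.single i 1 + c i = Pi.single i 1 + d i := by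
      refine eq_of_eqOn_pivots (single_add_mem_echelonSpace hc hi)
        (hcd ▸ single_add_mem_echelonSpace hd hi) fun l hl => ?_
      rw [pivots_echelonSpace hc] at hl
      simp [echelonTails_apply_of_mem hc i hl, echelonTails_apply_of_mem hd i hl]
    exact add_left_cancel hrow
  · rw [echelonTails_row_of_notMem hc hi, echelonTails_row_of_notMem hd hi]

lemma exists_echelonSpace_eq (W : Submodule K (ι → K)) :
    ∃ c ∈ echelonTails K (pivots W), echelonSpace (pivots W) c = W := by
  choose b hbW hb using fun i : ι =>
    exists_mem_eqOn_of_subset_pivots (Subset.refl (pivots W)) (Pi.single i (1 : K))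
  have hb_zero {i j : ι} (hj : j ∈ pivots W) (hji : j ≠ i) : b i j = 0 := by simp [hb i j hj, hji]
  let c : ι → ι → K := fun i => if i ∈ pivots W then b i - Pi.single i 1 else 0
  have hc : c ∈ echelonTails K (pivots W) := by
    intro i j hij
    have hi : i ∈ pivots W := by_contra fun hi => hij (by simp [c, hi])
    have hj : j ∉ pivots W := fun hj => hij (by simp [c, hi, hb i j hj])
    have hji : j ≠ i := fun h => hj (h ▸ hi)
    have hbij : b i j ≠ 0 := by simpa [c, hi, hji] using hij
    obtain ⟨l, hl, hlj, hbl⟩ := exists_mem_pivots_le (hbW i) hbij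
    obtain rfl : l = i := by_contra fun hli => hbl (hb_zero hl hli)
    exact ⟨hi, mem_freeColumns.2 ⟨hj, hlj.lt_of_ne' hji⟩⟩
  have hle : W ≤ echelonSpace (pivots W) c := by
    intro x hx j hj
    have hsum : x = ∑ i ∈ pivots W, x i • b i := by
      refine eq_of_eqOn_pivots hx (W.sum_mem fun i _ => W.smul_mem _ (hbW i)) fun l hl => ?_
      rw [Finset.sum_apply, sum_eq_single_of_mem l hl fun i _ hil => by simp [hb_zero hl hil.symm]]
      simp [hb l l hl]
    have hbc : ∀ i ∈ pivots W, b i j = c i j := fun i hi => by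
      have hji : j ≠ i := fun h => hj (h ▸ hi)
      simp [c, hi, hji]
    calc x j = ∑ i ∈ pivots W, x i * b i j := by simpa using congrFun hsum j
      _ = ∑ i ∈ pivots W, x i * c i j := sum_congr rfl fun i hi => by rw [hbc i hi]
  refine ⟨c, hc, (Submodule.eq_of_le_of_finrank_eq hle ?_).symm⟩
  rw [finrank_eq_card_pivots, finrank_eq_card_pivots, pivots_echelonSpace hc]

lemma ncard_setOf_pivots_eq [Fintype K] (I : Finset ι) :
    {W : Submodule K (ι → K) | pivots W = I}.ncard =
      Fintype.card K ^ ∑ i ∈ I, #(freeColumns I i) := by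
  have hbij : Set.BijOn (echelonSpace I) (echelonTails K I)
      {W : Submodule K (ι → K) | pivots W = I} :=
    ⟨fun _ hc => pivots_echelonSpace hc, injOn_echelonSpace, fun W hW => by
      obtain rfl := hW
      exact exists_echelonSpace_eq W⟩
  rw [← hbij.ncard_eq, ncard_echelonTails]

end Echelon

/-! ### Schubert cells -/

section Schubert

open Finset

section Field

variable {K : Type} [Field K] {n : ℕ}

lemma truncMap_apply (j : ℕ) (x : Fin n → K) (i : Fin n) :
    truncMap K n j x i = if (i : ℕ) < j then x i else 0 := by
  unfold truncMap
  split_ifs with h <;> simp [h]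

lemma pivots_map_truncMap (W : Submodule K (Fin n → K)) (j : ℕ) :
    pivots (W.map (truncMap K n j)) = (pivots W).filter fun i : Fin n => (i : ℕ) < j := by
  ext i
  simp only [mem_filter, mem_pivots, Submodule.mem_map, exists_exists_and_eq_and, truncMap_apply]
  constructor
  · rintro ⟨x, hx, hx0, hxi⟩
    obtain ⟨hij, hxi⟩ := ite_ne_right_iff.1 hxi
    refine ⟨⟨x, hx, fun l hl => ?_, hxi⟩, hij⟩
    simpa [(Fin.lt_def.1 hl).trans hij] using hx0 l hl
  · rintro ⟨⟨x, hx, hx0, hxi⟩, hij⟩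
    exact ⟨x, hx, fun l hl => by simp [hx0 l hl], by rwa [if_pos hij]⟩

lemma isPivot_iff_mem_map_pivots (W : Submodule K (Fin n → K)) (j : ℕ) :
    IsPivot W j ↔ j ∈ (pivots W).map Fin.valEmbedding := by
  set S := (pivots W).map Fin.valEmbedding with hS
  have hrank (l : ℕ) : Module.finrank K (W.map (truncMap K n l)) = #{i ∈ S | i < l} := by
    rw [finrank_eq_card_pivots, pivots_map_truncMap, hS, filter_map, card_map]
    rfl
  have hsucc : ({i ∈ S | i < j + 1} : Finset ℕ) =
      if j ∈ S then insert j {i ∈ S | i < j} else {i ∈ S | i < j} := by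
    ext i
    split_ifs <;> simp only [mem_filter, mem_insert] <;> grind
  rw [IsPivot, hrank, hrank, hsucc]
  split_ifs with hj <;> simp [hj]

end Field

/-- The sequences `ν₀ ≥ ν₁ ≥ ⋯` that are partitions with diagram inside the `k × l` rectangle. -/
structure IsBoxPartition (k l : ℕ) (ν : ℕ → ℕ) : Prop where
  antitone : Antitone ν
  le : ∀ y, ν y ≤ l
  eq_zero_of_le : ∀ y, k ≤ y → ν y = 0

/-- The pivot set `I_ν` of the Schubert cell of `ν` in `Gr_k(n)`, with columns counted from `0`. -/
def schubertPivots (n k : ℕ) (ν : ℕ → ℕ) : Finset ℕ :=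
  (range k).image fun i => i + (n - k) - ν i

/-- The open Schubert cell `Ω°_ν` in `Gr_k(n)`. -/
def schubertCell (K : Type) [Field K] (n k : ℕ) (ν : ℕ → ℕ) : Set (Submodule K (Fin n → K)) :=
  {W | ∀ j, IsPivot W j ↔ j ∈ schubertPivots n k ν}

namespace IsBoxPartition

variable {n k : ℕ} {ν ν' : ℕ → ℕ}

lemma strictMono_pivot {l : ℕ} (hν : IsBoxPartition k l ν) :
    StrictMono fun i => i + l - ν i := fun i j hij => by
  have := hν.antitone hij.le
  have := hν.le i
  dsimp only
  omega

lemma schubertPivots_injOn (n k : ℕ) :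
    Set.InjOn (schubertPivots n k) {ν | IsBoxPartition k (n - k) ν} := by
  intro ν hν ν' hν' h
  have hcomp : (fun i : Fin k => (i : ℕ) + (n - k) - ν i) =
      fun i : Fin k => (i : ℕ) + (n - k) - ν' i := by
    refine (StrictMono.range_inj (hν.strictMono_pivot.comp Fin.val_strictMono)
      (hν'.strictMono_pivot.comp Fin.val_strictMono)).1 (Set.ext fun x => ?_)
    simpa [schubertPivots, Fin.exists_iff] using Finset.ext_iff.1 h x
  funext y
  rcases lt_or_ge y k with hy | hy
  · have := congrFun hcomp ⟨y, hy⟩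
    have := hν.le y
    have := hν'.le y
    dsimp only at *
    omega
  · rw [hν.eq_zero_of_le y hy, hν'.eq_zero_of_le y hy]

/-- The elements of `I_ν` in increasing order. -/
def pivotEmbedding (hν : IsBoxPartition k (n - k) ν) (hkn : k ≤ n) : Fin k ↪o Fin n :=
  OrderEmbedding.ofStrictMono (fun i => ⟨i + (n - k) - ν i, by omega⟩)
    fun _ _ hij => hν.strictMono_pivot hij

lemma val_pivotEmbedding (hν : IsBoxPartition k (n - k) ν) (hkn : k ≤ n) (i : Fin k) :
    (hν.pivotEmbedding hkn i : ℕ) = i + (n - k) - ν i := rfl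

lemma mem_schubertCell_iff {K : Type} [Field K] (hν : IsBoxPartition k (n - k) ν) (hkn : k ≤ n)
    {W : Submodule K (Fin n → K)} :
    W ∈ schubertCell K n k ν ↔ pivots W = univ.map (hν.pivotEmbedding hkn).toEmbedding := by
  have himage : schubertPivots n k ν =
      (univ.map (hν.pivotEmbedding hkn).toEmbedding).map Fin.valEmbedding := by
    ext j
    rw [map_map]
    simp [schubertPivots, val_pivotEmbedding, Fin.exists_iff]
  rw [← (map_injective Fin.valEmbedding).eq_iff, ← himage, Finset.ext_iff]
  simp only [schubertCell, isPivot_iff_mem_map_pivots, Set.mem_ofPred_eq]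

lemma finrank_eq_of_mem_schubertCell {K : Type} [Field K] (hν : IsBoxPartition k (n - k) ν)
    (hkn : k ≤ n) {W : Submodule K (Fin n → K)} (hW : W ∈ schubertCell K n k ν) :
    Module.finrank K W = k := by
  rw [finrank_eq_card_pivots, (hν.mem_schubertCell_iff hkn).1 hW, card_map, card_univ,
    Fintype.card_fin]

lemma ncard_schubertCell {K : Type} [Field K] [Fintype K] (hν : IsBoxPartition k (n - k) ν)
    (hkn : k ≤ n) :
    (schubertCell K n k ν).ncard = Fintype.card K ^ ∑ y ∈ range k, ν y := by
  have hcell : schubertCell K n k ν =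
      {W | pivots W = univ.map (hν.pivotEmbedding hkn).toEmbedding} :=
    Set.ext fun W => hν.mem_schubertCell_iff hkn
  have hfree (s : Fin k) : #(freeColumns (univ.map (hν.pivotEmbedding hkn).toEmbedding)
      (hν.pivotEmbedding hkn s)) = ν s := by
    have := hν.le s
    rw [card_freeColumns_map, Fin.card_Ioi, Fin.card_Ioi, val_pivotEmbedding]
    omega
  rw [hcell, ncard_setOf_pivots_eq, sum_map, ← Fin.sum_univ_eq_sum_range]
  exact congrArg _ (sum_congr rfl fun s _ => hfree s)

end IsBoxPartition

lemma pairwiseDisjoint_schubertCell (K : Type) [Field K] (n k : ℕ) :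
    {ν | IsBoxPartition k (n - k) ν}.PairwiseDisjoint (schubertCell K n k) := by
  refine fun ν hν ν' hν' hne => Set.disjoint_left.2 fun W hW hW' => hne ?_
  exact IsBoxPartition.schubertPivots_injOn n k hν hν'
    (Finset.ext fun j => (hW j).symm.trans (hW' j))

lemma ncard_biUnion_schubertCell {K : Type} [Field K] [Fintype K] {n k : ℕ} (hkn : k ≤ n)
    {P : Set (ℕ → ℕ)} (hfin : P.Finite) (hP : ∀ ν ∈ P, IsBoxPartition k (n - k) ν) :
    (⋃ ν ∈ P, schubertCell K n k ν).ncard =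
      ∑ᶠ ν ∈ P, Fintype.card K ^ ∑ y ∈ range k, ν y := by
  rw [hfin.ncard_biUnion (fun _ _ => Set.toFinite _)
    ((pairwiseDisjoint_schubertCell K n k).subset hP)]
  exact finsum_mem_congr rfl fun ν hν => (hP ν hν).ncard_schubertCell hkn

end Schubert

/-! ### The partitions of a snake graph -/

section Tiles

open Finset

lemma tilePos_append_of_le (w : List Bool) (b : Bool) {j : ℕ} (hj : j ≤ w.length) :
    tilePos (w ++ [b]) j = tilePos w j := by
  rw [tilePos, tilePos, List.take_append_of_le_length hj]

lemma tilePos_length (w : List Bool) : tilePos w w.length = (w.count false, w.count true) := by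
  rw [tilePos, List.take_length]

lemma filter_tilePos_append (w : List Bool) (b : Bool) (p : ℕ × ℕ → Prop) [DecidablePred p] :
    {j ∈ range ((w ++ [b]).length + 1) | p (tilePos (w ++ [b]) j)} =
      if p ((w ++ [b]).count false, (w ++ [b]).count true) then
        insert (w.length + 1) {j ∈ range (w.length + 1) | p (tilePos w j)}
      else {j ∈ range (w.length + 1) | p (tilePos w j)} := by
  have hlen : (w ++ [b]).length = w.length + 1 := by simp
  have hlast : tilePos (w ++ [b]) (w.length + 1) =
      ((w ++ [b]).count false, (w ++ [b]).count true) := by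
    rw [← hlen, tilePos_length]
  have hold : {j ∈ range (w.length + 1) | p (tilePos (w ++ [b]) j)} =
      {j ∈ range (w.length + 1) | p (tilePos w j)} :=
    filter_congr fun j hj => by
      rw [tilePos_append_of_le w b (Nat.lt_succ_iff.1 (mem_range.1 hj))]
  rw [hlen, range_add_one, filter_insert, hlast, hold]

lemma rowLen_le (w : List Bool) (y : ℕ) : rowLen w y ≤ w.count false + 1 :=
  Nat.succ_le_succ (Finset.sup_le fun j _ => (List.take_sublist j w).count_le false)

lemma rowLen_of_count_le {w : List Bool} {y : ℕ} (hy : w.count true ≤ y) :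
    rowLen w y = w.count false + 1 := by
  have hlast : (tilePos w w.length).1 ≤ rowLen w y - 1 :=
    (le_sup (f := fun j => (tilePos w j).1) (by simpa [tilePos_length] using hy)).trans
      (Nat.add_sub_cancel _ 1).ge
  rw [tilePos_length] at hlast
  have := rowLen_le w y
  have : 1 ≤ rowLen w y := Nat.succ_pos _
  omega

lemma rowLen_append_of_lt {w : List Bool} {b : Bool} {y : ℕ} (hy : y < (w ++ [b]).count true) :
    rowLen (w ++ [b]) y = rowLen w y := by
  rw [rowLen, filter_tilePos_append w b (fun p => p.2 ≤ y), if_neg (not_le.2 hy), rowLen]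
  refine congrArg (· + 1) (sup_congr rfl fun j hj => ?_)
  rw [tilePos_append_of_le w b (Nat.lt_succ_iff.1 (mem_range.1 (mem_filter.1 hj).1))]

/-- The number of tiles in row `y` of the snake graph, rows being counted from the bottom. -/
def rowCard (w : List Bool) (y : ℕ) : ℕ :=
  #{j ∈ range (w.length + 1) | (tilePos w j).2 = y}

lemma rowCard_append (w : List Bool) (b : Bool) (y : ℕ) :
    rowCard (w ++ [b]) y = rowCard w y + if (w ++ [b]).count true = y then 1 else 0 := by
  rw [rowCard, filter_tilePos_append w b (fun p => p.2 = y), rowCard]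
  split_ifs
  · rw [card_insert_of_notMem (by simp)]
  · rfl

lemma rowCard_eq_zero_of_lt {w : List Bool} {y : ℕ} (hy : w.count true < y) : rowCard w y = 0 := by
  rw [rowCard, card_eq_zero, filter_eq_empty_iff]
  exact fun j _ => (((List.take_sublist j w).count_le true).trans_lt hy).ne

end Tiles

section Parts

/-- The sequence `(p, ν₀, ν₁, …)`. -/
def consPart (p : ℕ) (ν : ℕ → ℕ) : ℕ → ℕ
  | 0 => p
  | y + 1 => ν y

lemma consPart_zero_tail (ν : ℕ → ℕ) : consPart (ν 0) (fun y => ν (y + 1)) = ν := by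
  funext y
  cases y <;> rfl

lemma consPart_injective (p : ℕ) : Function.Injective (consPart p) :=
  fun _ _ h => funext fun y => congrFun h (y + 1)

lemma antitone_consPart {p : ℕ} {ν : ℕ → ℕ} : Antitone (consPart p ν) ↔ ν 0 ≤ p ∧ Antitone ν := by
  refine ⟨fun h => ⟨h zero_le_one, fun i j hij => h (Nat.succ_le_succ hij)⟩, fun ⟨hp, hν⟩ => ?_⟩
  refine antitone_nat_of_succ_le fun y => ?_
  cases y with
  | zero => exact hp
  | succ y => exact hν (Nat.le_succ y)

lemma sum_consPart (h p : ℕ) (ν : ℕ → ℕ) :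
    ∑ y ∈ Finset.range (h + 1), consPart p ν y = (∑ y ∈ Finset.range h, ν y) + p :=
  Finset.sum_range_succ' _ _

variable {w : List Bool} {y : ℕ}

lemma lamPart_of_le_count (hy : y ≤ w.count true) : lamPart w y = rowLen w (w.count true - y) :=
  if_pos (Nat.lt_succ_of_le hy)

lemma lamPart_of_count_lt (hy : w.count true < y) : lamPart w y = 0 :=
  if_neg (not_lt.2 hy)

lemma muPart_of_le_count (hy : y ≤ w.count true) :
    muPart w y = rowLen w (w.count true - y) - rowCard w (w.count true - y) :=
  if_pos (Nat.lt_succ_of_le hy)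

lemma muPart_of_count_lt (hy : w.count true < y) : muPart w y = 0 :=
  if_neg (not_lt.2 hy)

lemma lamPart_zero (w : List Bool) : lamPart w 0 = w.count false + 1 :=
  (lamPart_of_le_count (Nat.zero_le _)).trans (rowLen_of_count_le le_rfl)

lemma lamPart_le (w : List Bool) (y : ℕ) : lamPart w y ≤ w.count false + 1 := by
  rcases le_or_gt y (w.count true) with hy | hy
  · exact (lamPart_of_le_count hy).trans_le (rowLen_le w _)
  · exact (lamPart_of_count_lt hy).trans_le (Nat.zero_le _)

lemma muPart_zero_le (w : List Bool) : muPart w 0 ≤ w.count false + 1 := by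
  rw [muPart_of_le_count (Nat.zero_le _)]
  exact (Nat.sub_le _ _).trans (rowLen_le w _)

lemma lamPart_append_true (w : List Bool) :
    lamPart (w ++ [true]) = consPart (w.count false + 1) (lamPart w) := by
  have hcount : (w ++ [true]).count true = w.count true + 1 := by simp
  funext y
  rcases y with _ | y
  · simp [lamPart_zero, consPart]
  change _ = lamPart w y
  rcases le_or_gt y (w.count true) with hy | hy
  · rw [lamPart_of_le_count hy, lamPart_of_le_count (by omega), rowLen_append_of_lt (by omega),
      hcount, Nat.add_sub_add_right]
  · rw [lamPart_of_count_lt hy, lamPart_of_count_lt (by omega)]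

lemma lamPart_append_false_succ (w : List Bool) (y : ℕ) :
    lamPart (w ++ [false]) (y + 1) = lamPart w (y + 1) := by
  have hcount : (w ++ [false]).count true = w.count true := by simp
  rcases le_or_gt (y + 1) (w.count true) with hy | hy
  · rw [lamPart_of_le_count hy, lamPart_of_le_count (by omega), rowLen_append_of_lt (by omega),
      hcount]
  · rw [lamPart_of_count_lt hy, lamPart_of_count_lt (by omega)]

lemma muPart_append_true (w : List Bool) :
    muPart (w ++ [true]) = consPart (w.count false) (muPart w) := by
  have hcount : (w ++ [true]).count true = w.count true + 1 := by simp
  funext y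
  rcases y with _ | y
  · rw [muPart_of_le_count (Nat.zero_le _), Nat.sub_zero, rowLen_of_count_le le_rfl, rowCard_append,
      rowCard_eq_zero_of_lt (by omega), if_pos rfl]
    simp [consPart]
  change _ = muPart w y
  rcases le_or_gt y (w.count true) with hy | hy
  · rw [muPart_of_le_count hy, muPart_of_le_count (by omega), rowLen_append_of_lt (by omega),
      rowCard_append, if_neg (by omega), add_zero, hcount, Nat.add_sub_add_right]
  · rw [muPart_of_count_lt hy, muPart_of_count_lt (by omega)]

lemma muPart_append_false (w : List Bool) : muPart (w ++ [false]) = muPart w := by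
  have hcount : (w ++ [false]).count true = w.count true := by simp
  funext y
  rcases le_or_gt y (w.count true) with hy | hy
  · rw [muPart_of_le_count hy, muPart_of_le_count (by omega), rowCard_append, hcount]
    rcases y with _ | y
    · simp [rowLen_of_count_le]
    · rw [rowLen_append_of_lt (by omega), if_neg (by omega), add_zero]
  · rw [muPart_of_count_lt hy, muPart_of_count_lt (by omega)]

lemma lamPart_nil_succ (y : ℕ) : lamPart [] (y + 1) = 0 :=
  lamPart_of_count_lt (Nat.succ_pos y)

lemma muPart_nil : muPart [] = 0 := by
  funext y
  rcases y with _ | y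
  · rw [muPart_of_le_count (Nat.zero_le _), rowLen_of_count_le (Nat.zero_le _)]
    simp [rowCard, tilePos]
  · exact muPart_of_count_lt (Nat.succ_pos y)

end Parts

section SkewInterval

/-- The partitions `ν` with `μ ≤ ν ≤ λ`, where `λ/μ` is the snake graph of `w`. -/
def skewInterval (w : List Bool) : Set (ℕ → ℕ) :=
  {ν | Antitone ν ∧ ∀ y, muPart w y ≤ ν y ∧ ν y ≤ lamPart w y}

/-- The elements of `skewInterval w` not containing the last tile of the snake graph, which is the
last box of the top row of `λ`. -/
def shortInterval (w : List Bool) : Set (ℕ → ℕ) :=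
  {ν ∈ skewInterval w | ν 0 ≤ w.count false}

/-- The elements of `skewInterval w` containing the last tile of the snake graph, with their
top row removed. -/
def fullTails (w : List Bool) : Set (ℕ → ℕ) :=
  {ν | Antitone ν ∧ ∀ y, muPart w (y + 1) ≤ ν y ∧ ν y ≤ lamPart w (y + 1)}

lemma consPart_mem_skewInterval {w : List Bool} {p : ℕ} {ν : ℕ → ℕ} :
    consPart p ν ∈ skewInterval w ↔
      muPart w 0 ≤ p ∧ p ≤ w.count false + 1 ∧ ν 0 ≤ p ∧ ν ∈ fullTails w := by
  constructor
  · rintro ⟨hcons, h⟩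
    obtain ⟨h0, hν⟩ := antitone_consPart.1 hcons
    exact ⟨(h 0).1, (h 0).2.trans_eq (lamPart_zero w), h0, hν, fun y => h (y + 1)⟩
  · rintro ⟨hmu, hlam, h0, hν, h⟩
    refine ⟨antitone_consPart.2 ⟨h0, hν⟩, fun y => ?_⟩
    cases y with
    | zero => exact ⟨hmu, hlam.trans_eq (lamPart_zero w).symm⟩
    | succ y => exact h y

lemma apply_zero_le_of_mem_fullTails {w : List Bool} {ν : ℕ → ℕ} (hν : ν ∈ fullTails w) :
    ν 0 ≤ w.count false + 1 :=
  (hν.2 0).2.trans (lamPart_le w 1)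

lemma skewInterval_eq_union (w : List Bool) :
    skewInterval w = shortInterval w ∪ consPart (w.count false + 1) '' fullTails w := by
  ext ν
  constructor
  · intro hν
    rcases ((hν.2 0).2.trans_eq (lamPart_zero w)).lt_or_eq with h | h
    · exact .inl ⟨hν, Nat.le_of_lt_succ h⟩
    · refine .inr ⟨fun y => ν (y + 1), ?_, h ▸ consPart_zero_tail ν⟩
      rw [← consPart_zero_tail ν] at hν
      exact (consPart_mem_skewInterval.1 hν).2.2.2
  · rintro (hν | ⟨ν, hν, rfl⟩)
    · exact hν.1
    · exact consPart_mem_skewInterval.2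
        ⟨muPart_zero_le w, le_rfl, apply_zero_le_of_mem_fullTails hν, hν⟩

lemma disjoint_shortInterval_image_fullTails (w : List Bool) :
    Disjoint (shortInterval w) (consPart (w.count false + 1) '' fullTails w) := by
  refine Set.disjoint_left.2 ?_
  rintro _ hν ⟨ν, -, rfl⟩
  exact Nat.not_succ_le_self _ hν.2

lemma fullTails_append_true (w : List Bool) : fullTails (w ++ [true]) = skewInterval w := by
  simp only [fullTails, skewInterval, lamPart_append_true, muPart_append_true, consPart]

lemma fullTails_append_false (w : List Bool) : fullTails (w ++ [false]) = fullTails w := by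
  simp only [fullTails, lamPart_append_false_succ, muPart_append_false]

lemma shortInterval_append_true (w : List Bool) :
    shortInterval (w ++ [true]) = consPart (w.count false) '' shortInterval w := by
  have hcount : (w ++ [true]).count false = w.count false := by simp
  have hmu : muPart (w ++ [true]) 0 = w.count false := congrFun (muPart_append_true w) 0
  ext ν
  constructor
  · rintro ⟨hν, hν0⟩
    rw [hcount] at hν0
    have h0 : ν 0 = w.count false := le_antisymm hν0 (hmu ▸ (hν.2 0).1)
    rw [← consPart_zero_tail ν, consPart_mem_skewInterval, fullTails_append_true] at hν
    exact ⟨_, ⟨hν.2.2.2, h0 ▸ hν.2.2.1⟩, h0 ▸ consPart_zero_tail ν⟩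
  · rintro ⟨ν, ⟨hν, hν0⟩, rfl⟩
    refine ⟨consPart_mem_skewInterval.2 ⟨hmu.le, ?_, hν0, ?_⟩, hcount.ge⟩
    · exact hcount.symm ▸ Nat.le_succ _
    · rwa [fullTails_append_true]

lemma shortInterval_append_false (w : List Bool) :
    shortInterval (w ++ [false]) = skewInterval w := by
  have hcount : (w ++ [false]).count false = w.count false + 1 := by simp
  ext ν
  simp only [shortInterval, skewInterval, Set.mem_ofPred_eq, muPart_append_false,
    ← Nat.and_forall_add_one (p := fun y => muPart w y ≤ ν y ∧ _), lamPart_zero, hcount,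
    lamPart_append_false_succ]
  grind

lemma fullTails_nil : fullTails [] = {0} := by
  ext ν
  simp only [fullTails, muPart_nil, lamPart_nil_succ, Set.mem_ofPred_eq, Set.mem_singleton_iff]
  refine ⟨fun hν => funext fun y => Nat.le_zero.1 (hν.2 y).2, ?_⟩
  rintro rfl
  exact ⟨antitone_const, fun y => ⟨le_rfl, le_rfl⟩⟩

lemma shortInterval_nil : shortInterval [] = {0} := by
  ext ν
  refine ⟨fun ⟨hν, h0⟩ => funext fun y => Nat.le_zero.1 ((hν.1 (Nat.zero_le y)).trans h0), ?_⟩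
  rintro rfl
  exact ⟨⟨antitone_const, fun y => ⟨by simp [muPart_nil], Nat.zero_le _⟩⟩, Nat.zero_le _⟩

lemma finite_shortInterval_and_fullTails (w : List Bool) :
    (shortInterval w).Finite ∧ (fullTails w).Finite := by
  induction w using List.reverseRecOn with
  | nil => simp [shortInterval_nil, fullTails_nil]
  | append_singleton w b ih =>
    have hunion : (skewInterval w).Finite :=
      skewInterval_eq_union w ▸ ih.1.union (ih.2.image _)
    cases b with
    | false =>
      rw [shortInterval_append_false, fullTails_append_false]
      exact ⟨hunion, ih.2⟩
    | true =>
      rw [shortInterval_append_true, fullTails_append_true]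
      exact ⟨ih.1.image _, hunion⟩

lemma finite_skewInterval (w : List Bool) : (skewInterval w).Finite := by
  obtain ⟨hshort, hfull⟩ := finite_shortInterval_and_fullTails w
  exact skewInterval_eq_union w ▸ hshort.union (hfull.image _)

lemma isBoxPartition_of_mem_skewInterval {w : List Bool} {l : ℕ} (hl : w.count false + 1 ≤ l)
    {ν : ℕ → ℕ} (hν : ν ∈ skewInterval w) : IsBoxPartition (snakeHeight w) l ν where
  antitone := hν.1
  le y := (hν.2 y).2.trans ((lamPart_le w y).trans hl)
  eq_zero_of_le y hy := Nat.le_zero.1 ((hν.2 y).2.trans_eq (lamPart_of_count_lt hy))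

end SkewInterval

/-! ### The transfer matrices -/

section WordMatrix

open Matrix

variable {R : Type*} [CommSemiring R]

/-- The matrices `R_q = (q 1; 0 1)` and `L_q = (q 0; q 1)` of Morier-Genoud and Ovsienko, generating
the `q`-deformed modular group. The letter `true` stands for `L_q`. -/
def letterMatrix (q : R) : Bool → Matrix (Fin 2) (Fin 2) R
  | false => !![q, 1; 0, 1]
  | true => !![q, 0; q, 1]

lemma letterMatrix_false_mulVec (q : R) (v : Fin 2 → R) :
    letterMatrix q false *ᵥ v = ![q * v 0 + v 1, v 1] := by
  ext i
  fin_cases i <;> simp [letterMatrix, mulVec, dotProduct, Fin.sum_univ_two]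

lemma letterMatrix_true_mulVec (q : R) (v : Fin 2 → R) :
    letterMatrix q true *ᵥ v = ![q * v 0, q * v 0 + v 1] := by
  ext i
  fin_cases i <;> simp [letterMatrix, mulVec, dotProduct, Fin.sum_univ_two]

lemma vecMul_letterMatrix_false (q : R) (v : Fin 2 → R) :
    v ᵥ* letterMatrix q false = ![v 0 * q, v 0 + v 1] := by
  ext i
  fin_cases i <;> simp [letterMatrix, vecMul, dotProduct, Fin.sum_univ_two]

lemma vecMul_letterMatrix_true (q : R) (v : Fin 2 → R) :
    v ᵥ* letterMatrix q true = ![(v 0 + v 1) * q, v 1] := by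
  ext i
  fin_cases i <;> simp [letterMatrix, vecMul, dotProduct, Fin.sum_univ_two, add_mul]

/-- The matrix product spelled by a word, such as `R_q^{a₁} L_q^{a₂} ⋯` for the word of a continued
fraction. -/
def wordMatrix (q : R) (w : List Bool) : Matrix (Fin 2) (Fin 2) R :=
  (w.map (letterMatrix q)).prod

lemma wordMatrix_nil (q : R) : wordMatrix q [] = 1 := rfl

lemma wordMatrix_cons (q : R) (b : Bool) (w : List Bool) :
    wordMatrix q (b :: w) = letterMatrix q b * wordMatrix q w :=
  List.prod_cons

lemma wordMatrix_append (q : R) (w w' : List Bool) :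
    wordMatrix q (w ++ w') = wordMatrix q w * wordMatrix q w' := by
  rw [wordMatrix, List.map_append, List.prod_append, wordMatrix, wordMatrix]

lemma wordMatrix_singleton (q : R) (b : Bool) : wordMatrix q [b] = letterMatrix q b :=
  List.prod_singleton

lemma wordMatrix_map {S : Type*} [CommSemiring S] (f : R →+* S) (q : R) (w : List Bool) :
    wordMatrix (f q) w = (wordMatrix q w).map f := by
  have hletter (b : Bool) : letterMatrix (f q) b = (letterMatrix q b).map f := by
    cases b <;> ext i j <;> fin_cases i <;> fin_cases j <;> simp [letterMatrix]
  induction w with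
  | nil => simp [wordMatrix_nil]
  | cons b w ih => rw [wordMatrix_cons, wordMatrix_cons, Matrix.map_mul, ih, hletter]

/-- The pair `(R(q), S(q))` with `[r/s]_q = R(q)/S(q)`, when `w` is `false` followed by the word
of the snake graph of `r/s`. -/
def wordVec (q : R) (w : List Bool) : Fin 2 → R :=
  wordMatrix q w *ᵥ ![1, 1]

lemma wordVec_nil (q : R) : wordVec q [] = ![1, 1] :=
  one_mulVec _

lemma wordVec_cons (q : R) (b : Bool) (w : List Bool) :
    wordVec q (b :: w) = letterMatrix q b *ᵥ wordVec q w := by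
  rw [wordVec, wordMatrix_cons, ← mulVec_mulVec, wordVec]

lemma wordVec_map {S : Type*} [CommSemiring S] (f : R →+* S) (q : R) (w : List Bool) (i : Fin 2) :
    wordVec (f q) w i = f (wordVec q w i) := by
  simp [wordVec, wordMatrix_map, mulVec, dotProduct, Fin.sum_univ_two]

end WordMatrix

section GeneratingFunction

open Finset Matrix

variable {R : Type*} [CommSemiring R] (q : R)

/-- The generating function `∑_{ν ∈ P} q^{ν₀ + ⋯ + ν_{h-1}}`. The sum is finite in all uses. -/
noncomputable def partGF (h : ℕ) (P : Set (ℕ → ℕ)) : R :=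
  ∑ᶠ ν ∈ P, q ^ ∑ y ∈ range h, ν y

lemma partGF_union (h : ℕ) {P P' : Set (ℕ → ℕ)} (hP : P.Finite) (hP' : P'.Finite)
    (hd : Disjoint P P') : partGF q h (P ∪ P') = partGF q h P + partGF q h P' :=
  finsum_mem_union hd hP hP'

lemma partGF_image_consPart (h p : ℕ) {P : Set (ℕ → ℕ)} (hP : P.Finite) :
    partGF q (h + 1) (consPart p '' P) = q ^ p * partGF q h P := by
  rw [partGF, finsum_mem_image (consPart_injective p).injOn, partGF, mul_finsum_mem' _ _ hP]
  exact finsum_mem_congr rfl fun ν _ => by rw [sum_consPart, add_comm, pow_add]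

lemma partGF_singleton_zero (h : ℕ) : partGF q h {0} = 1 := by
  simp [partGF]

/-- The generating functions of the elements of `skewInterval w` that contain the last tile of the
snake graph and of those that do not. -/
noncomputable def splitGF (w : List Bool) : Fin 2 → R :=
  ![partGF q (snakeHeight w) (consPart (w.count false + 1) '' fullTails w),
    partGF q (snakeHeight w) (shortInterval w)]

lemma partGF_skewInterval (w : List Bool) :
    partGF q (snakeHeight w) (skewInterval w) = splitGF q w 0 + splitGF q w 1 := by
  obtain ⟨hshort, hfull⟩ := finite_shortInterval_and_fullTails w
  rw [skewInterval_eq_union, partGF_union q _ hshort (hfull.image _)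
    (disjoint_shortInterval_image_fullTails w), add_comm]
  rfl

lemma splitGF_zero (w : List Bool) : splitGF q w 0 =
    q ^ (w.count false + 1) * partGF q (w.count true) (fullTails w) :=
  partGF_image_consPart q _ _ (finite_shortInterval_and_fullTails w).2

lemma splitGF_append_false (w : List Bool) :
    splitGF q (w ++ [false]) = splitGF q w ᵥ* letterMatrix q false := by
  have hheight : snakeHeight (w ++ [false]) = snakeHeight w := by simp [snakeHeight]
  have hfull : splitGF q (w ++ [false]) 0 = q * splitGF q w 0 := by
    rw [splitGF_zero, splitGF_zero, fullTails_append_false]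
    simp [pow_succ', mul_assoc]
  have hshort : splitGF q (w ++ [false]) 1 = splitGF q w 0 + splitGF q w 1 := by
    rw [← partGF_skewInterval, ← shortInterval_append_false, ← hheight]
    rfl
  rw [vecMul_letterMatrix_false]
  ext i
  fin_cases i
  · exact hfull.trans (mul_comm _ _)
  · exact hshort

lemma splitGF_append_true (w : List Bool) :
    splitGF q (w ++ [true]) = q ^ w.count false • (splitGF q w ᵥ* letterMatrix q true) := by
  have hheight : snakeHeight (w ++ [true]) = snakeHeight w + 1 := by simp [snakeHeight]
  have hfull : splitGF q (w ++ [true]) 0 =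
      q ^ (w.count false + 1) * (splitGF q w 0 + splitGF q w 1) := by
    rw [splitGF_zero, fullTails_append_true, ← partGF_skewInterval]
    simp [snakeHeight]
  have hshort : splitGF q (w ++ [true]) 1 = q ^ w.count false * splitGF q w 1 := by
    refine Eq.trans ?_ (partGF_image_consPart q _ _ (finite_shortInterval_and_fullTails w).1)
    rw [← shortInterval_append_true, ← hheight]
    rfl
  rw [vecMul_letterMatrix_true]
  ext i
  fin_cases i
  · exact hfull.trans (by rw [pow_succ, mul_assoc, mul_comm q]; rfl)
  · exact hshort

lemma sum_muPart_append_true (w : List Bool) :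
    ∑ y ∈ range (snakeHeight (w ++ [true])), muPart (w ++ [true]) y =
      (∑ y ∈ range (snakeHeight w), muPart w y) + w.count false := by
  have hheight : snakeHeight (w ++ [true]) = snakeHeight w + 1 := by simp [snakeHeight]
  rw [hheight, muPart_append_true, sum_consPart]

lemma splitGF_eq (w : List Bool) :
    splitGF q w = q ^ (∑ y ∈ range (snakeHeight w), muPart w y) • (![q, 1] ᵥ* wordMatrix q w) := by
  induction w using List.reverseRecOn with
  | nil =>
    have hfull : splitGF q [] 0 = q := by
      rw [splitGF_zero, fullTails_nil, partGF_singleton_zero]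
      simp
    have hshort : splitGF q [] 1 = 1 := by
      simp [splitGF, shortInterval_nil, partGF_singleton_zero]
    ext i
    fin_cases i <;> simp [wordMatrix_nil, muPart_nil, hfull, hshort]
  | append_singleton w b ih =>
    rw [wordMatrix_append, wordMatrix_singleton, ← vecMul_vecMul]
    cases b with
    | false =>
      have hheight : snakeHeight (w ++ [false]) = snakeHeight w := by simp [snakeHeight]
      rw [splitGF_append_false, ih, smul_vecMul, hheight, muPart_append_false]
    | true =>
      rw [splitGF_append_true, ih, smul_vecMul, smul_smul, ← pow_add, sum_muPart_append_true,
        add_comm]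

theorem partGF_skewInterval_eq_pow_mul (w : List Bool) :
    partGF q (snakeHeight w) (skewInterval w) =
      q ^ (∑ y ∈ range (snakeHeight w), muPart w y) * wordVec q (false :: w) 0 := by
  have htotal : wordVec q (false :: w) 0 =
      (![q, 1] ᵥ* wordMatrix q w) 0 + (![q, 1] ᵥ* wordMatrix q w) 1 :=
    calc wordVec q (false :: w) 0 = ![q, 1] ⬝ᵥ wordVec q w := by
          rw [wordVec_cons]; rfl
      _ = (![q, 1] ᵥ* wordMatrix q w) ⬝ᵥ ![1, 1] := dotProduct_mulVec _ _ _
      _ = _ := by simp [dotProduct, Fin.sum_univ_two]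
  rw [partGF_skewInterval, splitGF_eq, htotal, mul_add]
  rfl

end GeneratingFunction

/-! ### The continued fraction -/

section RunWord

open Finset Matrix

/-- The word `false^{a₁} true^{a₂} false^{a₃} ⋯`. -/
def runWord (a : List ℕ) : List Bool :=
  (List.range a.length).flatMap fun i => List.replicate (a.getD i 0) (i % 2 == 1)

lemma runWord_cons_cons (a b : ℕ) (l : List ℕ) :
    runWord (a :: b :: l) = List.replicate a false ++ (List.replicate b true ++ runWord l) := by
  have hparity (i : ℕ) : (i + 1 + 1) % 2 = i % 2 := by omega
  simp only [runWord, List.length_cons, List.range_succ_eq_map, List.flatMap_cons, List.map_cons,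
    List.flatMap_map, List.getD_cons_succ, List.getD_cons_zero, List.map_map, Function.comp_apply,
    Nat.succ_eq_add_one, hparity]
  rfl

lemma length_runWord {a : List ℕ} (heven : Even a.length) : (runWord a).length = a.sum := by
  induction a using List.twoStepInduction with
  | nil => rfl
  | singleton a => simp at heven
  | cons_cons a b l ih _ =>
    have hl : Even l.length := by simpa [Nat.even_add_one] using heven
    simp [runWord_cons_cons, ih hl]

lemma cons_snakeWord_append {a : List ℕ} (hne : a ≠ []) (heven : Even a.length)
    (hpos : ∀ x ∈ a, 1 ≤ x) : false :: (snakeWord a ++ [true]) = runWord a := by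
  obtain ⟨N, hN⟩ : ∃ N, a.length = N + 2 := by
    obtain ⟨t, ht⟩ := heven
    have := List.length_pos_iff.2 hne
    exact ⟨a.length - 2, by omega⟩
  have hrange : List.range a.length = 0 :: ((List.range N).map Nat.succ ++ [N + 1]) := by
    rw [hN, List.range_succ, List.range_succ_eq_map, List.cons_append]
  have hparity : (N + 1) % 2 = 1 := by
    rw [hN] at heven
    grind
  have hgetD (i : ℕ) (hi : i < a.length) : 1 ≤ a.getD i 0 := by
    rw [List.getD_eq_getElem _ _ hi]
    exact hpos _ (List.getElem_mem hi)
  have hfirst : false :: List.replicate (a.getD 0 0 - 1) false =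
      List.replicate (a.getD 0 0) false := by
    rw [← List.replicate_succ, Nat.sub_add_cancel (hgetD 0 (by omega))]
  have hlast : List.replicate (a.getD (N + 1) 0 - 1) true ++ [true] =
      List.replicate (a.getD (N + 1) 0) true := by
    rw [← List.replicate_succ', Nat.sub_add_cancel (hgetD (N + 1) (by omega))]
  have hinterior : ∀ i ∈ List.range N, ¬(i + 1 = 0 ∨ i + 1 = N + 2 - 1) := fun i hi => by
    have := List.mem_range.1 hi
    omega
  rw [snakeWord, runWord, hrange]
  simp only [List.flatMap_cons, List.flatMap_append, List.flatMap_map, List.flatMap_nil, hN,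
    List.append_nil, hparity, Nat.succ_eq_add_one, List.append_assoc, ← List.cons_append]
  rw [List.flatMap_congr fun i hi => by rw [if_neg (hinterior i hi)], if_pos (.inl trivial),
    if_pos (.inr rfl)]
  exact congrArg₂ (· ++ ·) hfirst (congrArg (_ ++ ·) hlast)

end RunWord

section RunVec

open Finset Matrix

variable {R : Type*} [CommSemiring R] (v : R)

lemma wordMatrix_replicate_false_mulVec (a : ℕ) (r : Fin 2 → R) :
    wordMatrix v (List.replicate a false) *ᵥ r =
      ![v ^ a * r 0 + (∑ i ∈ range a, v ^ i) * r 1, r 1] := by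
  induction a with
  | zero => ext i; fin_cases i <;> simp [wordMatrix_nil]
  | succ a ih =>
    rw [List.replicate_succ, wordMatrix_cons, ← mulVec_mulVec, ih, letterMatrix_false_mulVec,
      geom_sum_succ]
    simp only [cons_val_zero, cons_val_one]
    refine congrArg (![·, r 1]) ?_
    ring

lemma wordMatrix_replicate_true_mulVec (b : ℕ) (r : Fin 2 → R) :
    wordMatrix v (List.replicate b true) *ᵥ r =
      ![v ^ b * r 0, v * (∑ i ∈ range b, v ^ i) * r 0 + r 1] := by
  induction b with
  | zero => ext i; fin_cases i <;> simp [wordMatrix_nil]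
  | succ b ih =>
    rw [List.replicate_succ, wordMatrix_cons, ← mulVec_mulVec, ih, letterMatrix_true_mulVec,
      sum_range_succ]
    simp only [cons_val_zero, cons_val_one]
    refine congrArg₂ (![·, ·]) ?_ ?_ <;> ring

/-- A numerator and a denominator of the `q`-deformed continued fraction of `a`. They have the
common factor `v` when `a` is nonempty of even length. -/
def runVec (a : List ℕ) : Fin 2 → R :=
  wordMatrix v (runWord a) *ᵥ ![1, 0]

lemma runVec_nil : runVec v [] = ![1, 0] :=
  one_mulVec _

lemma runVec_cons_cons_zero (a b : ℕ) (l : List ℕ) :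
    runVec v (a :: b :: l) 0 = v ^ a * (v ^ b * runVec v l 0) +
      (∑ i ∈ range a, v ^ i) * runVec v (a :: b :: l) 1 := by
  simp only [runVec, runWord_cons_cons, wordMatrix_append, ← mulVec_mulVec,
    wordMatrix_replicate_true_mulVec, wordMatrix_replicate_false_mulVec]
  rfl

lemma runVec_cons_cons_one (a b : ℕ) (l : List ℕ) :
    runVec v (a :: b :: l) 1 = v * (∑ i ∈ range b, v ^ i) * runVec v l 0 + runVec v l 1 := by
  simp only [runVec, runWord_cons_cons, wordMatrix_append, ← mulVec_mulVec,
    wordMatrix_replicate_true_mulVec, wordMatrix_replicate_false_mulVec]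
  rfl

lemma runVec_eq_smul_wordVec {a : List ℕ} (hne : a ≠ []) (heven : Even a.length)
    (hpos : ∀ x ∈ a, 1 ≤ x) : runVec v a = v • wordVec v (false :: snakeWord a) := by
  have hlast : letterMatrix v true *ᵥ ![1, 0] = v • ![1, 1] := by
    rw [letterMatrix_true_mulVec]
    simp
  rw [runVec, ← cons_snakeWord_append hne heven hpos, ← List.cons_append, wordMatrix_append,
    wordMatrix_singleton, ← mulVec_mulVec, hlast, mulVec_smul, wordVec]

end RunVec

section Normalized

open Polynomial

variable {A : Type*} [CommRing A]

/-- A reduced fraction `R / S` of monic polynomials with `deg S ≤ deg R` and `S(0)` invertible. The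
`q`-rationals `[r/s]_q` with `r/s ≥ 1` have this shape. -/
structure IsNormalizedPair (R S : A[X]) : Prop where
  monic_num : R.Monic
  monic_den : S.Monic
  degree_le : S.degree ≤ R.degree
  isCoprime : IsCoprime R S
  isCoprime_X_den : IsCoprime X S

namespace IsNormalizedPair

variable {R S : A[X]}

lemma one : IsNormalizedPair (1 : A[X]) 1 :=
  ⟨monic_one, monic_one, le_rfl, isCoprime_one_left, isCoprime_one_right⟩

lemma isCoprime_X_mul_num (h : IsNormalizedPair R S) : IsCoprime (X * R) S :=
  h.isCoprime_X_den.mul_left h.isCoprime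

variable [Nontrivial A]

lemma degree_den_lt (h : IsNormalizedPair R S) : S.degree < (X * R).degree := by
  rw [mul_comm]
  exact h.degree_le.trans_lt (degree_lt_degree_mul_X h.monic_num.ne_zero)

lemma X_mul_add_den (h : IsNormalizedPair R S) : IsNormalizedPair (X * R + S) S where
  monic_num := (monic_X.mul h.monic_num).add_of_left h.degree_den_lt
  monic_den := h.monic_den
  degree_le := by
    rw [degree_add_eq_left_of_degree_lt h.degree_den_lt]
    exact h.degree_den_lt.le
  isCoprime := by simpa using h.isCoprime_X_mul_num.add_mul_left_left 1
  isCoprime_X_den := h.isCoprime_X_den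

lemma X_mul_num (h : IsNormalizedPair R S) : IsNormalizedPair (X * R) (X * R + S) where
  monic_num := monic_X.mul h.monic_num
  monic_den := (monic_X.mul h.monic_num).add_of_left h.degree_den_lt
  degree_le := (degree_add_eq_left_of_degree_lt h.degree_den_lt).le
  isCoprime := by simpa [add_comm] using h.isCoprime_X_mul_num.add_mul_left_right 1
  isCoprime_X_den := by simpa [add_comm] using h.isCoprime_X_den.add_mul_left_right R

end IsNormalizedPair

variable (A) [Nontrivial A]

lemma isNormalizedPair_wordVec (w : List Bool) :
    IsNormalizedPair (wordVec (X : A[X]) w 0) (wordVec (X : A[X]) w 1) := by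
  induction w with
  | nil =>
    rw [wordVec_nil]
    exact .one
  | cons b w ih =>
    cases b with
    | false =>
      rw [wordVec_cons, letterMatrix_false_mulVec]
      exact ih.X_mul_add_den
    | true =>
      rw [wordVec_cons, letterMatrix_true_mulVec]
      exact ih.X_mul_num

end Normalized

section ContinuedFraction

open Finset Polynomial

lemma sum_inv_pow {F : Type*} [Field F] {v : F} (hv : v ≠ 0) (b : ℕ) :
    ∑ i ∈ range b, v⁻¹ ^ i = v * (∑ i ∈ range b, v ^ i) / v ^ b := by
  induction b with
  | zero => simp
  | succ b ih =>
    rw [geom_sum_succ, ih, sum_range_succ]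
    field_simp
    ring

lemma qCF_cons (v : RatFunc ℚ) (a : ℕ) (l : List ℕ) :
    qCF v (a :: l) = (∑ i ∈ range a, v ^ i) + v ^ a / qCF v⁻¹ l := by
  cases l with
  | nil => simp [qCF]
  | cons b l => rfl

lemma qCF_cons_cons_eq_div {v R S : RatFunc ℚ} (hv : v ≠ 0) (hR : R ≠ 0) {b : ℕ}
    (hS : v * (∑ i ∈ range b, v ^ i) * R + S ≠ 0) {l : List ℕ} (hl : qCF v l = R / S) (a : ℕ) :
    qCF v (a :: b :: l) =
      (v ^ a * (v ^ b * R) +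
        (∑ i ∈ range a, v ^ i) * (v * (∑ i ∈ range b, v ^ i) * R + S)) /
      (v * (∑ i ∈ range b, v ^ i) * R + S) := by
  have hinner : qCF v⁻¹ (b :: l) = (v * (∑ i ∈ range b, v ^ i) * R + S) / (v ^ b * R) := by
    rw [qCF_cons, inv_inv, hl, sum_inv_pow hv, inv_pow]
    field_simp
  rw [qCF_cons, hinner, div_div_eq_mul_div, add_div (v ^ a * _), mul_div_cancel_right₀ _ hS,
    add_comm]

lemma wordVec_ratFunc_X (w : List Bool) (i : Fin 2) :
    wordVec (RatFunc.X : RatFunc ℚ) w i = algebraMap ℚ[X] (RatFunc ℚ) (wordVec X w i) := by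
  rw [← wordVec_map, RatFunc.algebraMap_X]

lemma runVec_ratFunc_X_ne_zero {a : List ℕ} (hne : a ≠ []) (heven : Even a.length)
    (hpos : ∀ x ∈ a, 1 ≤ x) (i : Fin 2) : runVec (RatFunc.X : RatFunc ℚ) a i ≠ 0 := by
  have hword : wordVec (X : ℚ[X]) (false :: snakeWord a) i ≠ 0 := by
    have h := isNormalizedPair_wordVec ℚ (false :: snakeWord a)
    fin_cases i
    exacts [h.monic_num.ne_zero, h.monic_den.ne_zero]
  rw [runVec_eq_smul_wordVec _ hne heven hpos, Pi.smul_apply, wordVec_ratFunc_X]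
  exact mul_ne_zero RatFunc.X_ne_zero (RatFunc.algebraMap_ne_zero hword)

lemma qCF_eq_runVec_div {a : List ℕ} (heven : Even a.length) (hpos : ∀ x ∈ a, 1 ≤ x) :
    qCF RatFunc.X a = runVec RatFunc.X a 0 / runVec RatFunc.X a 1 := by
  induction a using List.twoStepInduction with
  | nil =>
    -- The empty continued fraction is `0 = 1 / 0`.
    simp [qCF, runVec_nil]
  | singleton a => simp at heven
  | cons_cons a b l ih _ =>
    have hl : Even l.length := by simpa [Nat.even_add_one] using heven
    have hlpos : ∀ x ∈ l, 1 ≤ x := fun x hx => hpos x (by simp [hx])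
    have hnum : runVec (RatFunc.X : RatFunc ℚ) l 0 ≠ 0 := by
      rcases eq_or_ne l [] with rfl | hne
      · simp [runVec_nil]
      · exact runVec_ratFunc_X_ne_zero hne hl hlpos 0
    have hden := runVec_ratFunc_X_ne_zero (List.cons_ne_nil _ _) heven hpos 1
    rw [runVec_cons_cons_one] at hden
    rw [qCF_cons_cons_eq_div RatFunc.X_ne_zero hnum hden (ih hl hlpos), runVec_cons_cons_zero,
      runVec_cons_cons_one]

lemma num_div_of_isCoprime {F : Type*} [Field F] {R S : F[X]} (h : IsCoprime R S)
    (hS : S.Monic) :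
    (algebraMap F[X] (RatFunc F) R / algebraMap F[X] (RatFunc F) S).num = R := by
  classical
  have hgcd : gcd R S = 1 := by
    rw [← _root_.normalize_gcd, normalize_eq_one]
    exact (gcd_isUnit_iff R S).2 h
  rw [RatFunc.num_div, hgcd, EuclideanDomain.div_one, EuclideanDomain.div_one, hS.leadingCoeff]
  simp

theorem num_qCF {a : List ℕ} (hne : a ≠ []) (heven : Even a.length) (hpos : ∀ x ∈ a, 1 ≤ x) :
    (qCF RatFunc.X a).num = wordVec (X : ℚ[X]) (false :: snakeWord a) 0 := by
  have hnorm := isNormalizedPair_wordVec ℚ (false :: snakeWord a)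
  rw [qCF_eq_runVec_div heven hpos, runVec_eq_smul_wordVec _ hne heven hpos, Pi.smul_apply,
    Pi.smul_apply, smul_eq_mul, smul_eq_mul, mul_div_mul_left _ _ RatFunc.X_ne_zero,
    wordVec_ratFunc_X, wordVec_ratFunc_X]
  exact num_div_of_isCoprime hnorm.isCoprime hnorm.monic_den

theorem eval_num_qCF {a : List ℕ} (hne : a ≠ []) (heven : Even a.length) (hpos : ∀ x ∈ a, 1 ≤ x)
    (q : ℚ) : (qCF RatFunc.X a).num.eval q = wordVec q (false :: snakeWord a) 0 := by
  rw [num_qCF hne heven hpos, ← coe_evalRingHom, ← wordVec_map, coe_evalRingHom, eval_X]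

end ContinuedFraction

/-! ### The point count -/

section Main

lemma count_false_add_snakeHeight_le {w : List Bool} {n : ℕ} (hn : w.length + 2 ≤ n) :
    w.count false + 1 + snakeHeight w ≤ n := by
  have := List.count_false_add_count_true w
  rw [snakeHeight]
  omega

variable {K : Type} [Field K]

lemma setOf_finrank_eq_biUnion_schubertCell {w : List Bool} {n : ℕ} (hn : w.length + 2 ≤ n) :
    {W : Submodule K (Fin n → K) | Module.finrank K W = snakeHeight w ∧
      ∃ ν : ℕ → ℕ, Antitone ν ∧ (∀ y, muPart w y ≤ ν y ∧ ν y ≤ lamPart w y) ∧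
        ∀ j, IsPivot W j ↔ j ∈ schubertPivots n (snakeHeight w) ν} =
      ⋃ ν ∈ skewInterval w, schubertCell K n (snakeHeight w) ν := by
  have hbox := count_false_add_snakeHeight_le hn
  ext W
  rw [Set.mem_iUnion₂]
  constructor
  · rintro ⟨-, ν, hanti, hν, hW⟩
    exact ⟨ν, ⟨hanti, hν⟩, hW⟩
  · rintro ⟨ν, hν, hW⟩
    have hνbox := isBoxPartition_of_mem_skewInterval (Nat.le_sub_of_add_le hbox) hν
    exact ⟨hνbox.finrank_eq_of_mem_schubertCell (by omega) hW, ν, hν.1, hν.2, hW⟩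

theorem ncard_biUnion_schubertCell_skewInterval [Fintype K] {w : List Bool} {n : ℕ}
    (hn : w.length + 2 ≤ n) :
    (⋃ ν ∈ skewInterval w, schubertCell K n (snakeHeight w) ν).ncard =
      Fintype.card K ^ (∑ y ∈ Finset.range (snakeHeight w), muPart w y) *
        wordVec (Fintype.card K) (false :: w) 0 := by
  have hbox := count_false_add_snakeHeight_le hn
  rw [ncard_biUnion_schubertCell (by omega) (finite_skewInterval w)
    fun ν hν => isBoxPartition_of_mem_skewInterval (Nat.le_sub_of_add_le hbox) hν]
  exact partGF_skewInterval_eq_pow_mul _ w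

end Main

/-- For `r/s = [a₁,…,a₂ₘ]`, `n = ∑ aᵢ`, `k = ∑ a₂ᵢ` (the height of the
snake graph), and `λ = λ(r/s)`, `μ = μ(r/s)`, the number of `F_q`-points of the union
of open Schubert cells `⋃_{μ ≤ ν ≤ λ} Ω°_ν ⊆ Gr_k(F_q^n)` equals `q^{|μ|}·R(q)`,
where `R(q)` is the numerator of the q-rational `[r/s]_q`. -/
theorem card_union_schubert_cells_eq_qRational_numerator
    (m : ℕ) (hm : 0 < m) (a : List ℕ) (hlen : a.length = 2 * m)
    (hpos : ∀ x ∈ a, 1 ≤ x) (K : Type) [Field K] [Fintype K] :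
    (Nat.card {W : Submodule K (Fin a.sum → K) //
        Module.finrank K W = snakeHeight (snakeWord a) ∧
        ∃ ν : ℕ → ℕ, Antitone ν ∧
          (∀ y, muPart (snakeWord a) y ≤ ν y ∧ ν y ≤ lamPart (snakeWord a) y) ∧
          ∀ j : ℕ, IsPivot W j ↔ j ∈ Finset.image
            (fun i => i + (a.sum - snakeHeight (snakeWord a)) - ν i)
            (Finset.range (snakeHeight (snakeWord a)))} : ℚ) =
      (Fintype.card K : ℚ) ^
          (∑ y ∈ Finset.range (snakeHeight (snakeWord a)), muPart (snakeWord a) y) *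
        (qCF RatFunc.X a).num.eval (Fintype.card K : ℚ) := by
  have hne : a ≠ [] := List.ne_nil_of_length_pos (by omega)
  have heven : Even a.length := hlen ▸ even_two_mul m
  have hsum : (snakeWord a).length + 2 ≤ a.sum := by
    rw [← length_runWord heven, ← cons_snakeWord_append hne heven hpos]
    simp
  rw [eval_num_qCF hne heven hpos]
  calc
    _ = ((⋃ ν ∈ skewInterval (snakeWord a),
          schubertCell K a.sum (snakeHeight (snakeWord a)) ν).ncard : ℚ) :=
      congrArg (fun s => (Set.ncard s : ℚ)) (setOf_finrank_eq_biUnion_schubertCell hsum)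
    _ = ((Fintype.card K ^
          (∑ y ∈ Finset.range (snakeHeight (snakeWord a)), muPart (snakeWord a) y) *
          wordVec (Fintype.card K) (false :: snakeWord a) 0 : ℕ) : ℚ) := by
      rw [ncard_biUnion_schubertCell_skewInterval hsum]
    _ = _ := by
      rw [Nat.cast_mul, Nat.cast_pow]
      exact congrArg _ (wordVec_map (Nat.castRingHom ℚ) _ _ 0).symm
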